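/- arXiv:1403.2209 — 2 statements merged into one kernel-verified Lean document; each statement's English description precedes it below -/
import Mathlib

section
/- Let ℓ be a prime number and c ∈ ℤ_ℓ^×. For every n ∈ ℕ and every integer i with 0 ≤ i < ℓ^n, the functions of the Bernoulli measure E_{1,c} satisfy the distribution relation ∑_{t=0}^{ℓ−1} E^{(n+1)}_{1,c}(i + t·ℓ^n) = E^{(n)}_{1,c}(i). -/
/-!
Multiplication by `c⁻¹` permutes the `ℓ` lifts modulo `ℓ^(n+1)` of a residue class modulo `ℓ^n`
onto the `ℓ` lifts of its image. Writing `⟨c⁻¹(i + tℓ^n)⟩_{n+1} = ⟨c⁻¹i⟩_n + ℓ^n q(t)`, the top digit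
`q` is therefore a permutation of `{0, …, ℓ-1}`, so these representatives add up to
`ℓ ⟨c⁻¹i⟩_n + ℓ^n · ℓ(ℓ-1)/2` (`sum_padicRepr_lifts`). Likewise the `i + tℓ^n` add up to
`ℓ i + ℓ^n · ℓ(ℓ-1)/2`, and the two terms in `ℓ(ℓ-1)/2` combine with the constants `(c-1)/2`.
-/

open scoped BigOperators

/-- `⟨x⟩_n` : the unique integer in `[0, ℓ^n)` congruent to `x` modulo `ℓ^n`. -/
noncomputable def padicRepr (l : ℕ) [Fact (Nat.Prime l)] (n : ℕ) (x : ℤ_[l]) : ℕ :=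
  (PadicInt.toZModPow n x).val

/-- The function `E^{(n)}_{1,c} : {0,…,ℓ^n−1} → ℚ_ℓ` of the Bernoulli measure `E_{1,c}`,
`E^{(n)}_{1,c}(i) = i/ℓ^n − c·⟨c^{−1}·i⟩_n/ℓ^n + (c−1)/2`. -/
noncomputable def bernoulliMeasureFun (l : ℕ) [Fact (Nat.Prime l)] (c : ℤ_[l]ˣ)
    (n : ℕ) (i : ℕ) : ℚ_[l] :=
  (i : ℚ_[l]) / (l : ℚ_[l]) ^ n
    - ((c : ℤ_[l]) : ℚ_[l]) *
        ((padicRepr l n (((c⁻¹ : ℤ_[l]ˣ) : ℤ_[l]) * (i : ℤ_[l])) : ℚ_[l]) / (l : ℚ_[l]) ^ n)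
    + (((c : ℤ_[l]) : ℚ_[l]) - 1) / 2

lemma padicRepr_lt (l : ℕ) [Fact (Nat.Prime l)] (n : ℕ) (x : ℤ_[l]) :
    padicRepr l n x < l ^ n :=
  ZMod.val_lt _

lemma padicRepr_succ_mod (l : ℕ) [Fact (Nat.Prime l)] (n : ℕ) (x : ℤ_[l]) :
    padicRepr l (n + 1) x % l ^ n = padicRepr l n x := by
  unfold padicRepr
  rw [← PadicInt.cast_toZModPow n (n + 1) n.le_succ x, ZMod.cast_eq_val, ZMod.val_natCast]

/-- The representative modulo `ℓ^n` of `u(i + tℓ^n)` does not depend on `t`. -/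
lemma padicRepr_mul_add (l : ℕ) [Fact (Nat.Prime l)] (n : ℕ) (u : ℤ_[l]) (i t : ℕ) :
    padicRepr l n (u * ((i + t * l ^ n : ℕ) : ℤ_[l])) = padicRepr l n (u * (i : ℤ_[l])) := by
  unfold padicRepr
  rw [map_mul, map_mul, map_natCast, map_natCast, Nat.cast_add, Nat.cast_mul, ZMod.natCast_self,
    mul_zero, add_zero]

/-- Multiplication by a unit is injective on residues modulo `ℓ^n`. -/
lemma eq_of_padicRepr_unit_mul_eq (l : ℕ) [Fact (Nat.Prime l)] (n : ℕ) (u : ℤ_[l]ˣ) {a b : ℕ}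
    (ha : a < l ^ n) (hb : b < l ^ n)
    (h : padicRepr l n ((u : ℤ_[l]) * (a : ℤ_[l])) = padicRepr l n ((u : ℤ_[l]) * (b : ℤ_[l]))) :
    a = b := by
  have h1 := ZMod.val_injective _ h
  rw [map_mul, map_mul, map_natCast, map_natCast] at h1
  have h2 := (u.isUnit.map (PadicInt.toZModPow n)).mul_left_cancel h1
  exact Nat.ModEq.eq_of_lt_of_lt ((ZMod.natCast_eq_natCast_iff _ _ _).1 h2) ha hb

lemma add_mul_pow_lt {l n i t : ℕ} (hi : i < l ^ n) (ht : t < l) :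
    i + t * l ^ n < l ^ (n + 1) := by
  have : (t + 1) * l ^ n ≤ l * l ^ n := Nat.mul_le_mul_right _ ht
  rw [pow_succ']
  linarith

/-- The representatives of `u(i + tℓ^n)`, `0 ≤ t < ℓ`, are the numbers `⟨ui⟩_n + sℓ^n`,
`0 ≤ s < ℓ`, in some order; hence the value of their sum. -/
lemma sum_padicRepr_lifts (l : ℕ) [Fact (Nat.Prime l)] (u : ℤ_[l]ˣ) (n i : ℕ) (hi : i < l ^ n) :
    ∑ t ∈ Finset.range l,
        padicRepr l (n + 1) ((u : ℤ_[l]) * ((i + t * l ^ n : ℕ) : ℤ_[l])) =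
      l * padicRepr l n ((u : ℤ_[l]) * (i : ℤ_[l])) + l ^ n * ∑ t ∈ Finset.range l, t := by
  set r : ℕ → ℕ := fun t =>
    padicRepr l (n + 1) ((u : ℤ_[l]) * ((i + t * l ^ n : ℕ) : ℤ_[l])) with hr
  have hl : 0 < l := (Fact.out : Nat.Prime l).pos
  have hmod (t : ℕ) : r t % l ^ n = padicRepr l n ((u : ℤ_[l]) * (i : ℤ_[l])) := by
    rw [hr, padicRepr_succ_mod, padicRepr_mul_add]
  have hdec (t : ℕ) :
      r t = padicRepr l n ((u : ℤ_[l]) * (i : ℤ_[l])) + l ^ n * (r t / l ^ n) := by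
    rw [← hmod t, Nat.mod_add_div]
  have hmaps : ∀ t ∈ Finset.range l, r t / l ^ n ∈ Finset.range l := by
    intro t _
    rw [Finset.mem_range, Nat.div_lt_iff_lt_mul (pow_pos hl n), ← pow_succ']
    exact padicRepr_lt l (n + 1) _
  have hinj : Set.InjOn (fun t => r t / l ^ n) (Finset.range l : Set ℕ) := by
    intro s hs t ht hst
    have hrst : r s = r t := by
      rw [hdec s, hdec t]
      exact congrArg (fun q => _ + l ^ n * q) hst
    have := eq_of_padicRepr_unit_mul_eq l (n + 1) u
      (add_mul_pow_lt hi (by simpa using hs)) (add_mul_pow_lt hi (by simpa using ht)) hrst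
    exact Nat.eq_of_mul_eq_mul_right (pow_pos hl n) (Nat.add_left_cancel this)
  have hperm : ∑ t ∈ Finset.range l, r t / l ^ n = ∑ t ∈ Finset.range l, t :=
    Finset.sum_nbij (fun t => r t / l ^ n) hmaps hinj
      (Finset.surjOn_of_injOn_of_card_le _ hmaps hinj le_rfl) (fun _ _ => rfl)
  calc ∑ t ∈ Finset.range l, r t
      = ∑ t ∈ Finset.range l,
          (padicRepr l n ((u : ℤ_[l]) * (i : ℤ_[l])) + l ^ n * (r t / l ^ n)) :=
        Finset.sum_congr rfl fun t _ => hdec t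
    _ = _ := by
        rw [Finset.sum_add_distrib, ← Finset.mul_sum, hperm]
        simp

/-- The Bernoulli measure functions satisfy the distribution relation:
for `0 ≤ i < ℓ^n`, `∑_{t=0}^{ℓ−1} E^{(n+1)}_{1,c}(i + t·ℓ^n) = E^{(n)}_{1,c}(i)`. -/
theorem bernoulliMeasure_distribution_relation (l : ℕ) [Fact (Nat.Prime l)] (c : ℤ_[l]ˣ)
    (n : ℕ) (i : ℕ) (hi : i < l ^ n) :
    ∑ t ∈ Finset.range l, bernoulliMeasureFun l c (n + 1) (i + t * l ^ n) =
      bernoulliMeasureFun l c n i := by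
  have hl : Nat.Prime l := Fact.out
  have hl0 : (l : ℚ_[l]) ≠ 0 := by exact_mod_cast hl.ne_zero
  have hR := congrArg (Nat.cast : ℕ → ℚ_[l]) (sum_padicRepr_lifts l c⁻¹ n i hi)
  have hS := congrArg (Nat.cast : ℕ → ℚ_[l]) (Finset.sum_range_id_mul_two l)
  have hI : ∑ t ∈ Finset.range l, ((i + t * l ^ n : ℕ) : ℚ_[l])
      = l * i + l ^ n * ((∑ t ∈ Finset.range l, t : ℕ) : ℚ_[l]) := by
    push_cast
    rw [Finset.sum_add_distrib, ← Finset.sum_mul]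
    simp [mul_comm]
  rw [Nat.cast_mul, Nat.cast_mul, Nat.cast_sub hl.one_le, Nat.cast_ofNat, Nat.cast_one] at hS
  rw [Nat.cast_sum, Nat.cast_add, Nat.cast_mul, Nat.cast_mul, Nat.cast_pow] at hR
  have hS' : ((∑ t ∈ Finset.range l, t : ℕ) : ℚ_[l]) = l * (l - 1) / 2 :=
    eq_div_of_mul_eq two_ne_zero hS
  unfold bernoulliMeasureFun
  rw [Finset.sum_add_distrib, Finset.sum_sub_distrib, ← Finset.mul_sum, ← Finset.sum_div,
    ← Finset.sum_div, hR, hI, hS', Finset.sum_const, Finset.card_range, nsmul_eq_mul]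
  field_simp
  ring
end

section
/- Let p_1, p_2, …, p_r be distinct prime numbers and let m = p_1·p_2⋯p_r. Then for every integer k ≥ 1, the sum of B_k(i/m) over all integers i with 1 ≤ i ≤ m−1 and gcd(i,m) = 1 equals (∏_{j=1}^{r} (1 − p_j^{k−1})/p_j^{k−1}) · B_k, where B_k(x) is the k-th Bernoulli polynomial evaluated at the rational number i/m and B_k is the k-th Bernoulli number. -/
/-!
Two ingredients give the formula. The first is the distribution relation
`q ^ k * ∑_{b < q} B_k((x + b) / q) = q * B_k(x)`. Write `R_k` for the difference of its two sides.
The difference equation `B_k(x + 1) - B_k(x) = k x ^ (k - 1)` shows that `R_k` is a polynomial of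
period `1`, hence constant; since `R_{k+1}' = (k + 1) R_k`, it follows that `R_k = 0`.

The second is a recursion for `F(n) = ∑ B_k(i / n)`, summed over `0 ≤ i < n` with `i` coprime to
`n`. For a prime `q` not dividing `n`, the indices `i < n q` coprime to `n q` are those coprime to
`n` minus the multiples of `q` among them. Writing `i = n b + a`, the former contribute
`q ^ (1 - k) F(n)` by the distribution relation; writing `i = q b`, the latter contribute `F(n)`.
So `F(n q) = (q ^ (1 - k) - 1) F(n)`, and `F(1) = B_k`.
-/

open scoped BigOperators

namespace BernoulliCoprime

open Polynomial Finset

/-- The difference of the two sides of the distribution relation, as a polynomial. -/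
noncomputable def distribDefect (q k : ℕ) : ℚ[X] :=
  C ((q : ℚ) ^ k) * ∑ b ∈ range q,
      (Polynomial.bernoulli k).comp (C ((q : ℚ)⁻¹) * (X + C (b : ℚ)))
    - C (q : ℚ) * Polynomial.bernoulli k

lemma eval_distribDefect (q k : ℕ) (x : ℚ) :
    (distribDefect q k).eval x =
      (q : ℚ) ^ k * ∑ b ∈ range q, (Polynomial.bernoulli k).eval ((q : ℚ)⁻¹ * (x + b))
        - q * (Polynomial.bernoulli k).eval x := by
  simp [distribDefect, eval_finsetSum]

lemma eval_distribDefect_add_one (q k : ℕ) (hq : q ≠ 0) (x : ℚ) :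
    (distribDefect q k).eval (x + 1) = (distribDefect q k).eval x := by
  have hq' : (q : ℚ) ≠ 0 := by exact_mod_cast hq
  -- Shifting `x` by `1` shifts the summation index, so the sum telescopes.
  have tele : ∑ b ∈ range q, (Polynomial.bernoulli k).eval ((q : ℚ)⁻¹ * (x + 1 + b))
      - ∑ b ∈ range q, (Polynomial.bernoulli k).eval ((q : ℚ)⁻¹ * (x + b))
      = k * ((q : ℚ)⁻¹ * x) ^ (k - 1) := by
    rw [← sum_sub_distrib]
    have := sum_range_sub
      (fun b : ℕ => (Polynomial.bernoulli k).eval ((q : ℚ)⁻¹ * (x + b))) q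
    have e : (q : ℚ)⁻¹ * (x + q) = 1 + (q : ℚ)⁻¹ * x := by field_simp; ring
    rw [e, bernoulli_eval_one_add] at this
    simp only [Nat.cast_zero, add_zero, add_sub_cancel_left] at this
    rw [← this]
    refine sum_congr rfl fun b _ => ?_
    push_cast
    rw [show x + 1 + (b : ℚ) = x + (b + 1) by ring]
  have hB := bernoulli_eval_one_add k x
  rw [add_comm 1 x] at hB
  rw [eval_distribDefect, eval_distribDefect, hB, sub_eq_iff_eq_add.mp tele]
  rcases k with _ | k
  · simp
  · have : (q : ℚ) ^ (k + 1) * ((q : ℚ)⁻¹ * x) ^ k = q * x ^ k := by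
      rw [mul_pow, inv_pow]; field_simp; ring
    simp only [Nat.add_sub_cancel]
    linear_combination ((k + 1 : ℕ) : ℚ) * this

lemma distribDefect_eq_C (q k : ℕ) (hq : q ≠ 0) :
    distribDefect q k = C ((distribDefect q k).eval 0) := by
  have h : ∀ n : ℕ, (distribDefect q k).eval (n : ℚ) = (distribDefect q k).eval 0 := by
    intro n
    induction n with
    | zero => simp
    | succ n ih => push_cast; rw [eval_distribDefect_add_one q k hq, ih]
  refine eq_of_infinite_eval_eq _ _ ((Set.infinite_range_of_injective
    (Nat.cast_injective (R := ℚ))).mono ?_)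
  rintro _ ⟨n, rfl⟩
  simp [h n]

lemma derivative_distribDefect (q k : ℕ) (hq : q ≠ 0) :
    derivative (distribDefect q (k + 1)) = C ((k : ℚ) + 1) * distribDefect q k := by
  have hq' : (q : ℚ) ≠ 0 := by exact_mod_cast hq
  refine Polynomial.funext fun x => ?_
  rw [eval_mul, eval_distribDefect]
  simp only [distribDefect, derivative_sub, derivative_mul, derivative_C, zero_mul, zero_add,
    derivative_sum, derivative_comp, derivative_bernoulli_add_one, derivative_add, derivative_X,
    add_zero, mul_one, eval_sub, eval_mul, eval_C, eval_finsetSum, eval_comp, eval_add, eval_X,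
    mul_comp, add_comp, natCast_comp, one_comp, eval_natCast, eval_one]
  rw [← mul_sum, ← mul_sum, pow_succ]
  field_simp

/-- The distribution relation for Bernoulli polynomials. -/
lemma bernoulli_distribution (q k : ℕ) (hq : q ≠ 0) (x : ℚ) :
    (q : ℚ) ^ k * ∑ b ∈ range q, (Polynomial.bernoulli k).eval ((q : ℚ)⁻¹ * (x + b))
      = q * (Polynomial.bernoulli k).eval x := by
  have h := derivative_distribDefect q k hq
  rw [distribDefect_eq_C q (k + 1) hq, derivative_C] at h
  have h2 := congrArg (eval x) h
  rw [eval_mul, eval_distribDefect, eval_C, eval_zero] at h2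
  have hk : (k : ℚ) + 1 ≠ 0 := by positivity
  exact sub_eq_zero.mp ((mul_eq_zero.mp h2.symm).resolve_left hk)

lemma sum_range_mul_eq (f : ℕ → ℚ) (n q : ℕ) :
    ∑ i ∈ range (n * q), f i = ∑ b ∈ range q, ∑ a ∈ range n, f (n * b + a) := by
  induction q with
  | zero => simp
  | succ q ih => rw [Nat.mul_succ, sum_range_add, ih, sum_range_succ]

/-- The sum of `B_k(i / n)` over the residues `0 ≤ i < n` coprime to `n`. For `n = 1` the index
`i = 0` is included, which makes the value `B_k`. -/
noncomputable def coprimeSum (k n : ℕ) : ℚ :=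
  ∑ i ∈ range n, if Nat.Coprime i n then
    (Polynomial.bernoulli k).eval ((i : ℚ) / (n : ℚ)) else 0

lemma coprimeSum_mul_prime (k n q : ℕ) (hk : 1 ≤ k) (hn : n ≠ 0) (hq : q.Prime)
    (hqn : Nat.Coprime n q) :
    coprimeSum k (n * q) =
      (1 - (q : ℚ) ^ (k - 1)) / (q : ℚ) ^ (k - 1) * coprimeSum k n := by
  have hq' : (q : ℚ) ≠ 0 := by exact_mod_cast hq.ne_zero
  have hn' : (n : ℚ) ≠ 0 := by exact_mod_cast hn
  have split : coprimeSum k (n * q) =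
      (∑ i ∈ range (n * q), if Nat.Coprime i n then
        (Polynomial.bernoulli k).eval ((i : ℚ) / ((n * q : ℕ) : ℚ)) else 0)
      - ∑ i ∈ range (q * n), if q ∣ i ∧ Nat.Coprime i n then
        (Polynomial.bernoulli k).eval ((i : ℚ) / ((n * q : ℕ) : ℚ)) else 0 := by
    rw [mul_comm q n, ← sum_sub_distrib, coprimeSum]
    refine sum_congr rfl fun i _ => ?_
    have h1 : Nat.Coprime i (n * q) ↔ Nat.Coprime i n ∧ ¬ q ∣ i := by
      rw [Nat.coprime_mul_iff_right, Nat.coprime_comm (m := q), hq.coprime_iff_not_dvd]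
    by_cases hd : q ∣ i <;> by_cases hc : Nat.Coprime i n <;> simp [h1, hd, hc]
  have first : (∑ i ∈ range (n * q), if Nat.Coprime i n then
        (Polynomial.bernoulli k).eval ((i : ℚ) / ((n * q : ℕ) : ℚ)) else 0)
      = 1 / (q : ℚ) ^ (k - 1) * coprimeSum k n := by
    rw [sum_range_mul_eq, sum_comm, coprimeSum, mul_sum]
    refine sum_congr rfl fun a _ => ?_
    have hc : ∀ b, Nat.Coprime (n * b + a) n ↔ Nat.Coprime a n := fun b => by simp
    simp only [hc]
    by_cases ha : Nat.Coprime a n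
    · simp only [if_pos ha]
      have hd := bernoulli_distribution q k hq.ne_zero ((a : ℚ) / n)
      have hs : ∀ b : ℕ, ((n * b + a : ℕ) : ℚ) / ((n * q : ℕ) : ℚ)
          = (q : ℚ)⁻¹ * ((a : ℚ) / n + b) := by
        intro b; push_cast; field_simp; ring
      simp only [hs]
      obtain ⟨l, rfl⟩ : ∃ l, k = l + 1 := ⟨k - 1, by omega⟩
      rw [pow_succ, mul_comm ((q : ℚ) ^ l) q, mul_assoc] at hd
      have hd := mul_left_cancel₀ hq' hd
      rw [Nat.add_sub_cancel, ← hd]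
      field_simp
    · simp [ha]
  have second : (∑ i ∈ range (q * n), if q ∣ i ∧ Nat.Coprime i n then
        (Polynomial.bernoulli k).eval ((i : ℚ) / ((n * q : ℕ) : ℚ)) else 0)
      = coprimeSum k n := by
    rw [sum_range_mul_eq, coprimeSum]
    refine sum_congr rfl fun b _ => ?_
    rw [sum_eq_single_of_mem 0 (mem_range.mpr hq.pos)]
    · have hc : Nat.Coprime (q * b) n ↔ Nat.Coprime b n := by
        rw [Nat.coprime_mul_iff_left]
        exact and_iff_right hqn.symm
      have hs : ((q * b : ℕ) : ℚ) / ((n * q : ℕ) : ℚ) = (b : ℚ) / n := by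
        push_cast; field_simp
      simp only [add_zero, hc, hs, dvd_mul_right, true_and]
    · intro a ha ha0
      refine if_neg fun h => ha0 ?_
      exact Nat.eq_zero_of_dvd_of_lt
        ((Nat.dvd_add_right (dvd_mul_right q b)).mp h.1) (mem_range.mp ha)
  rw [split, first, second]
  field_simp

lemma coprimeSum_prod {ι : Type*} (p : ι → ℕ) (hp : ∀ j, (p j).Prime)
    (hinj : Function.Injective p) (k : ℕ) (hk : 1 ≤ k) (s : Finset ι) :
    coprimeSum k (∏ j ∈ s, p j) =
      (∏ j ∈ s, (1 - (p j : ℚ) ^ (k - 1)) / (p j : ℚ) ^ (k - 1)) * _root_.bernoulli k := by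
  classical
  induction s using Finset.induction_on with
  | empty => simp [coprimeSum]
  | insert j s hj ih =>
    rw [prod_insert hj, prod_insert hj, mul_comm (p j), coprimeSum_mul_prime k _ _ hk
      (prod_ne_zero_iff.mpr fun i _ => (hp i).ne_zero) (hp j), ih, mul_assoc]
    refine Nat.Coprime.prod_left fun i hi => (Nat.coprime_primes (hp i) (hp j)).mpr ?_
    exact fun h => hj (hinj h ▸ hi)

end BernoulliCoprime

/-- Lemma 11.1: if `p_1, …, p_r` are distinct primes and `m = p_1⋯p_r`, then for `k ≥ 1`
the sum of `B_k(i/m)` over `1 ≤ i ≤ m − 1` with `gcd(i,m) = 1` equals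
`(∏_j (1 − p_j^{k−1})/p_j^{k−1}) · B_k`. -/
theorem sum_bernoulliPoly_coprime (r : ℕ) (hr : 0 < r) (p : Fin r → ℕ)
    (hp : ∀ j, Nat.Prime (p j)) (hinj : Function.Injective p) (k : ℕ) (hk : 1 ≤ k) :
    ∑ i ∈ (Finset.Ico 1 (∏ j, p j)).filter (fun i => Nat.Coprime i (∏ j, p j)),
        (Polynomial.bernoulli k).eval ((i : ℚ) / ((∏ j, p j : ℕ) : ℚ)) =
      (∏ j, (1 - (p j : ℚ) ^ (k - 1)) / (p j : ℚ) ^ (k - 1)) * bernoulli k := by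
  rw [← BernoulliCoprime.coprimeSum_prod p hp hinj k hk, BernoulliCoprime.coprimeSum,
    ← Finset.sum_filter]
  -- As `r > 0`, the modulus is not `1`, so the index `0` is not coprime to it.
  have hm : ∏ j, p j ≠ 1 := fun h =>
    (hp ⟨0, hr⟩).one_lt.ne' (Nat.dvd_one.mp (h ▸ Finset.dvd_prod_of_mem p (Finset.mem_univ _)))
  refine Finset.sum_congr ?_ fun _ _ => rfl
  ext i
  simp only [Finset.mem_filter, Finset.mem_Ico, Finset.mem_range]
  refine ⟨fun h => ⟨h.1.2, h.2⟩, fun h => ⟨⟨Nat.one_le_iff_ne_zero.mpr ?_, h.1⟩, h.2⟩⟩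
  rintro rfl
  exact hm (Nat.coprime_zero_left _ |>.mp h.2)
end
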